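/- Let v, w ∈ S_n. Define the flattening map fl : D(v) → ℕ×ℕ by fl(i,j) = (i′, j), where i′ = #{r ≤ i : (r,j) ∈ D(v)}. Then: (a) fl is injective and its image is contained in the staircase St_n; (b) fl preserves canonical labels: the canonical label of (i,j) in D(v) equals i′ + j − 1; (c) for every P ∈ RedPipes(v, w), the image fl(P) is a reduced FK pipe dream for w, i.e. fl(P) ∈ RedFKPipes(w). -/

import Mathlib

/-!
With `i` counting rows from the bottom, call `(n - 1 - v k, k)` the dots of `v`; a box `(i, j)` lies
in `D(v)` when the dot of column `j` is above it and the dot of row `i` is to its right.  Let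
`R = rankMat v i j` be the number of dots weakly southwest of `(i, j)`.  For a box of `D(v)`, the
boxes of its column weakly below it are the rows whose dot is to the right of column `j`, so there
are `i + 1 - R` of them (`colCount_add_rankMat`); dually there are `j + 1 - R` boxes of its row
weakly to the left (`rowCount_add_rankMat`).  Both labels are therefore `i + j + 1 - R`.

For the Demazure product, flattening permutes the reading word, and any two boxes whose relative
order changes have labels differing by at least 2 (`flatten_order`): for boxes in the same row or
column the order is kept, and for `i₂ < i`, `j₂ < j` the count of dots gives a label gap of at
least 2 because neither the dot of row `i` nor that of column `j` is southwest of `(i, j)`.  For `i₂ < i`, `j < j₂`, an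
exchange means that the second box has both flattened coordinates strictly larger, which again
separates the labels by at least 2.  The
Demazure steps for labels at distance at least 2 commute (`fkStep_comm`), since `s_l` lengthens `u`
exactly when `u` takes a smaller value at `l` than at `l + 1` (`invCount_lt_mul_swap`), so the product is unchanged
(`foldl_eq_of_perm`).
-/

open Equiv MvPolynomial

noncomputable section
open scoped Classical

variable {n : ℕ}

/-- The 0-based value of a permutation of `Fin n` on a natural number,
extended by the identity outside `{0, …, n-1}`. -/
def permVal (v : Equiv.Perm (Fin n)) (j : ℕ) : ℕ :=
  if h : j < n then (v ⟨j, h⟩ : ℕ) else j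

/-- The longest element `w₀` of the symmetric group, `w₀(i) = n + 1 - i` (1-based). -/
def longest : Equiv.Perm (Fin n) :=
  ⟨Fin.rev, Fin.rev, Fin.rev_rev, Fin.rev_rev⟩

/-- The Rothe diagram of `v`, as a set of 0-based boxes `(i, j)` where `i` counts rows
from the bottom and `j` columns from the left.  In 1-based terms this is
`{(i,j) : i < n - v(j) + 1 and j < v⁻¹(n - i + 1)}`. -/
def Rothe (v : Equiv.Perm (Fin n)) : Finset (ℕ × ℕ) :=
  (Finset.range n ×ˢ Finset.range n).filter
    (fun p => p.1 + permVal v p.2 + 1 < n ∧ p.2 < permVal v.symm (n - 1 - p.1))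

/-- The rank matrix `r^w_{ij} = #{k ≤ j : w(k) ≥ n - i + 1}` (translated to 0-based `i`, `j`). -/
def rankMat (w : Equiv.Perm (Fin n)) (i j : ℕ) : ℕ :=
  ((Finset.range n).filter (fun t => t ≤ j ∧ n ≤ permVal w t + i + 1)).card

/-- Bruhat order via rank matrices. -/
def bruhatLE (u w : Equiv.Perm (Fin n)) : Prop :=
  ∀ i j : ℕ, rankMat u i j ≤ rankMat w i j

/-- The essential set of `w`. -/
def essentialSet (w : Equiv.Perm (Fin n)) : Finset (ℕ × ℕ) :=
  (Rothe w).filter (fun p => (p.1 + 1, p.2) ∉ Rothe w ∧ (p.1, p.2 + 1) ∉ Rothe w)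

/-- The number of inversions (Coxeter length) of a permutation. -/
def invCount (u : Equiv.Perm (Fin n)) : ℕ :=
  ((Finset.univ : Finset (Fin n × Fin n)).filter
    (fun p => p.1 < p.2 ∧ u p.2 < u p.1)).card

/-- The adjacent transposition `s_l` (`l` 1-based) swapping `l` and `l+1`;
the identity if `l` is out of range. -/
def adjSwap {n : ℕ} (l : ℕ) : Equiv.Perm (Fin n) :=
  if h : 1 ≤ l ∧ l < n then Equiv.swap ⟨l - 1, by omega⟩ ⟨l, h.2⟩ else 1

/-- The canonical (1-based) label of a box of `D(v)`: the `t`-th box from the left in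
(1-based) row `i` gets label `i + t - 1`. -/
def canonLabel (v : Equiv.Perm (Fin n)) (b : ℕ × ℕ) : ℕ :=
  b.1 + ((Rothe v).filter (fun b' => b'.1 = b.1 ∧ b'.2 ≤ b.2)).card

/-- The boxes of `P` listed in reading order: rows from top (largest row index) to bottom,
left to right within each row. -/
def readingList (n : ℕ) (P : Finset (ℕ × ℕ)) : List (ℕ × ℕ) :=
  ((List.range n).reverse).flatMap
    (fun i => ((List.range n).filter (fun j => decide ((i, j) ∈ P))).map (fun j => (i, j)))

/-- One step of the Demazure product: multiply by `s_ℓ` if that increases length. -/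
def demStep (v : Equiv.Perm (Fin n)) (u : Equiv.Perm (Fin n)) (b : ℕ × ℕ) :
    Equiv.Perm (Fin n) :=
  if invCount u < invCount (u * adjSwap (canonLabel v b)) then u * adjSwap (canonLabel v b)
  else u

/-- The Demazure product of a pipe dream `P ⊆ D(v)`, scanning boxes in reading order. -/
def demazure (v : Equiv.Perm (Fin n)) (P : Finset (ℕ × ℕ)) : Equiv.Perm (Fin n) :=
  (readingList n P).foldl (demStep v) 1

/-- Pipe dreams on `D(v)` whose Demazure product is `x`. -/
def Pipes (v x : Equiv.Perm (Fin n)) : Finset (Finset (ℕ × ℕ)) :=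
  (Rothe v).powerset.filter (fun P => demazure v P = x)

/-- Reduced pipe dreams on `D(v)` for `x`. -/
def RedPipes (v x : Equiv.Perm (Fin n)) : Finset (Finset (ℕ × ℕ)) :=
  (Pipes v x).filter (fun P => P.card = invCount x)

/-- Faces of the pipe complex `Δ_{v,w}`: subsets `F ⊆ D(v)` such that `D(v) \ F`
contains a reduced pipe dream for `w₀ w`. -/
def IsFace (v w : Equiv.Perm (Fin n)) (F : Finset (ℕ × ℕ)) : Prop :=
  F ⊆ Rothe v ∧ ∃ P ∈ RedPipes v (longest * w), P ⊆ Rothe v \ F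

/-- The staircase `{(i,j) : i + j ≤ n}` (1-based), translated to 0-based boxes. -/
def staircase (n : ℕ) : Finset (ℕ × ℕ) :=
  (Finset.range n ×ˢ Finset.range n).filter (fun p => p.1 + p.2 + 2 ≤ n)

/-- The label `i + j - 1` (1-based) of a staircase box, in 0-based coordinates. -/
def fkLabel (b : ℕ × ℕ) : ℕ := b.1 + b.2 + 1

/-- One step of the Demazure product for Fomin–Kirillov pipe dreams. -/
def fkStep (u : Equiv.Perm (Fin n)) (b : ℕ × ℕ) : Equiv.Perm (Fin n) :=
  if invCount u < invCount (u * adjSwap (fkLabel b)) then u * adjSwap (fkLabel b) else u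

/-- The Demazure product of an FK pipe dream on the staircase. -/
def fkDemazure (n : ℕ) (P : Finset (ℕ × ℕ)) : Equiv.Perm (Fin n) :=
  (readingList n P).foldl fkStep 1

/-- FK pipe dreams on the staircase with Demazure product `x`. -/
def FKPipes (x : Equiv.Perm (Fin n)) : Finset (Finset (ℕ × ℕ)) :=
  (staircase n).powerset.filter (fun P => fkDemazure n P = x)

/-- Reduced FK pipe dreams for `x`. -/
def RedFKPipes (x : Equiv.Perm (Fin n)) : Finset (Finset (ℕ × ℕ)) :=
  (FKPipes x).filter (fun P => P.card = invCount x)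

/-- The coordinate ring `R_v = k[z_{ij} : (i,j) ∈ D(v)]`. -/
abbrev KLRing (k : Type) [Field k] (v : Equiv.Perm (Fin n)) : Type :=
  MvPolynomial {b : ℕ × ℕ // b ∈ Rothe v} k

/-- The specialized generic matrix `Z^{(v)}`: variables on `D(v)`, `1` in positions
`(n - v(j) + 1, j)` (1-based) and `0` elsewhere. -/
def klMatrix (k : Type) [Field k] (v : Equiv.Perm (Fin n)) :
    Matrix (Fin n) (Fin n) (KLRing k v) := fun i j =>
  if h : ((i : ℕ), (j : ℕ)) ∈ Rothe v then X ⟨((i : ℕ), (j : ℕ)), h⟩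
  else if (i : ℕ) + permVal v j + 1 = n then 1 else 0

/-- The minors of size `1 + r^w_{ij}` of the southwest submatrix `Z^{(v)}_{ij}`
(`(i,j)` a 0-based box, so rows `0..i` and columns `0..j`). -/
def minorsAt (k : Type) [Field k] (v w : Equiv.Perm (Fin n)) (i j : ℕ) :
    Set (KLRing k v) :=
  { d | ∃ ri ci : Fin (rankMat w i j + 1) → Fin n,
      StrictMono ri ∧ StrictMono ci ∧ (∀ a, (ri a : ℕ) ≤ i) ∧ (∀ a, (ci a : ℕ) ≤ j) ∧
      d = ((klMatrix k v).submatrix ri ci).det }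

/-- The Kazhdan–Lusztig ideal `I_{v,w}`. -/
def KLIdeal (k : Type) [Field k] (v w : Equiv.Perm (Fin n)) : Ideal (KLRing k v) :=
  Ideal.span { d | ∃ i j : ℕ, i < n ∧ j < n ∧ d ∈ minorsAt k v w i j }

/-- The essential minors of `I_{v,w}`: those at boxes of the essential set of `w`. -/
def essentialMinors (k : Type) [Field k] (v w : Equiv.Perm (Fin n)) : Set (KLRing k v) :=
  { d | ∃ b ∈ essentialSet w, d ∈ minorsAt k v w b.1 b.2 }

/-- Significance of a variable: `z_{ij} ≻ z_{kl}` iff `j > l` or (`j = l` and `i < k`),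
encoded so that larger significance means ≺-larger variable. -/
def sigIdx (n : ℕ) (b : ℕ × ℕ) : ℕ := b.2 * n + (n - 1 - b.1)

/-- The exponent in a monomial of the variable of significance `s`. -/
def expAt {v : Equiv.Perm (Fin n)} (m : {b : ℕ × ℕ // b ∈ Rothe v} →₀ ℕ) (s : ℕ) : ℕ :=
  ∑ b ∈ m.support, if sigIdx n (b : ℕ × ℕ) = s then m b else 0

/-- The lexicographic comparison of monomials: `m ≻ m'`. -/
def monGT {v : Equiv.Perm (Fin n)} (m m' : {b : ℕ × ℕ // b ∈ Rothe v} →₀ ℕ) : Prop :=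
  ∃ s : ℕ, expAt m' s < expAt m s ∧ ∀ t : ℕ, s < t → expAt m t = expAt m' t

/-- `L` is the ≺-leading term of `f`. -/
def IsLeadTerm (k : Type) [Field k] {v : Equiv.Perm (Fin n)} (f L : KLRing k v) : Prop :=
  ∃ m ∈ f.support, (∀ m' ∈ f.support, m' ≠ m → monGT m m') ∧
    L = MvPolynomial.monomial m (f.coeff m)

/-- The initial ideal of `I` with respect to `≺`: the ideal generated by the leading
terms of all nonzero elements of `I`. -/
def initialIdeal (k : Type) [Field k] {v : Equiv.Perm (Fin n)} (I : Ideal (KLRing k v)) :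
    Ideal (KLRing k v) :=
  Ideal.span { L | ∃ f ∈ I, f ≠ 0 ∧ IsLeadTerm k f L }


/-- `i` (1-based) is the last ascent of `v`: `v(i) < v(i+1)` and no ascent occurs later. -/
def IsLastAscent (v : Equiv.Perm (Fin n)) (i : ℕ) : Prop :=
  1 ≤ i ∧ i < n ∧ permVal v (i - 1) < permVal v i ∧
    ∀ i' : ℕ, i < i' → i' < n → ¬ permVal v (i' - 1) < permVal v i'

/-- The box `z_last = (n - v(i+1) + 1, i)` (1-based), in 0-based coordinates,
where `i` is the last ascent of `v`. -/
def zlastBox (v : Equiv.Perm (Fin n)) (i : ℕ) : ℕ × ℕ :=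
  (n - permVal v i - 1, i - 1)

/-- The relabeling map `φ`: delete the box `z_last` and move every other box of
column `i` (1-based) one step to the right. -/
def phiMap (v : Equiv.Perm (Fin n)) (i : ℕ) (P : Finset (ℕ × ℕ)) : Finset (ℕ × ℕ) :=
  P.filter (fun b => b.2 ≠ i - 1) ∪
    ((P.filter (fun b => b.2 = i - 1 ∧ b.1 ≠ n - permVal v i - 1)).image
      (fun b => (b.1, b.2 + 1)))

/-- The flattening map: compress the boxes of each column of `D(v)` southward. -/
def flattenBox (v : Equiv.Perm (Fin n)) (b : ℕ × ℕ) : ℕ × ℕ :=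
  (((Rothe v).filter (fun b' => b'.2 = b.2 ∧ b'.1 ≤ b.1)).card - 1, b.2)

/-! ### Dots of a permutation -/

lemma permVal_lt (v : Equiv.Perm (Fin n)) {j : ℕ} (h : j < n) : permVal v j < n := by
  simp [permVal, h]

lemma permVal_symm_permVal (v : Equiv.Perm (Fin n)) {j : ℕ} (h : j < n) :
    permVal v.symm (permVal v j) = j := by
  simp [permVal, h]

lemma permVal_permVal_symm (v : Equiv.Perm (Fin n)) {j : ℕ} (h : j < n) :
    permVal v (permVal v.symm j) = j := by
  simp [permVal, h]

lemma permVal_inj (v : Equiv.Perm (Fin n)) {j k : ℕ} (hj : j < n) (hk : k < n)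
    (h : permVal v j = permVal v k) : j = k := by
  rw [← permVal_symm_permVal v hj, h, permVal_symm_permVal v hk]

lemma mem_Rothe (v : Equiv.Perm (Fin n)) (i j : ℕ) :
    (i, j) ∈ Rothe v ↔ i < n ∧ j < n ∧ i + permVal v j + 1 < n ∧
      j < permVal v.symm (n - 1 - i) := by
  simp [Rothe, and_assoc]

/-- The dot of row `i`, for a box `(i, j)` of `D(v)`, is in no column weakly left of `j`. -/
lemma Rothe_row_dot (v : Equiv.Perm (Fin n)) {i j k : ℕ} (h : (i, j) ∈ Rothe v)
    (hk : k ≤ j) : n ≠ permVal v k + i + 1 := by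
  intro e
  obtain ⟨h1, h2, h3, h4⟩ := (mem_Rothe v i j).1 h
  have e' : n - 1 - i = permVal v k := by omega
  rw [e', permVal_symm_permVal v (by omega)] at h4
  omega

/-- The number of dots in rows `≤ i` strictly to the right of column `j`. -/
def colCount (v : Equiv.Perm (Fin n)) (i j : ℕ) : ℕ :=
  ((Finset.range n).filter (fun k => j < k ∧ n ≤ permVal v k + i + 1)).card

/-- The number of dots in columns `≤ j` strictly above row `i`. -/
def rowCount (v : Equiv.Perm (Fin n)) (i j : ℕ) : ℕ :=
  ((Finset.range n).filter (fun k => k ≤ j ∧ ¬ n ≤ permVal v k + i + 1)).card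

lemma colCount_eq (v : Equiv.Perm (Fin n)) {i j : ℕ} (h : (i, j) ∈ Rothe v) :
    ((Rothe v).filter (fun b' => b'.2 = j ∧ b'.1 ≤ i)).card = colCount v i j := by
  obtain ⟨h1, h2, h3, h4⟩ := (mem_Rothe v i j).1 h
  symm
  refine Finset.card_nbij' (fun k => (n - 1 - permVal v k, j))
    (fun b => permVal v.symm (n - 1 - b.1)) ?_ ?_ ?_ ?_
  · intro k hk
    simp only [Finset.coe_filter, Finset.mem_range, Set.mem_ofPred_eq] at hk ⊢
    obtain ⟨hk, hjk, hr⟩ := hk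
    have := permVal_lt v hk
    have e : n - 1 - (n - 1 - permVal v k) = permVal v k := by omega
    refine ⟨(mem_Rothe v _ _).2 ⟨by omega, h2, by omega, ?_⟩, trivial, by omega⟩
    rw [e, permVal_symm_permVal v hk]
    exact hjk
  · rintro ⟨a, b⟩ hab
    simp only [Finset.coe_filter, Finset.mem_range, Set.mem_ofPred_eq] at hab ⊢
    obtain ⟨hD, rfl, hai⟩ := hab
    obtain ⟨g1, g2, g3, g4⟩ := (mem_Rothe v _ _).1 hD
    refine ⟨permVal_lt _ (by omega), g4, ?_⟩
    rw [permVal_permVal_symm v (by omega)]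
    omega
  · intro k hk
    simp only [Finset.coe_filter, Finset.mem_range, Set.mem_ofPred_eq] at hk ⊢
    have := permVal_lt v hk.1
    have e : n - 1 - (n - 1 - permVal v k) = permVal v k := by omega
    rw [e, permVal_symm_permVal v hk.1]
  · rintro ⟨a, b⟩ hab
    simp only [Finset.coe_filter, Set.mem_ofPred_eq] at hab ⊢
    obtain ⟨hD, rfl, hai⟩ := hab
    obtain ⟨g1, g2, g3, g4⟩ := (mem_Rothe v _ _).1 hD
    rw [permVal_permVal_symm v (by omega)]
    simp only [Prod.mk.injEq, and_true]
    omega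

lemma rowCount_eq (v : Equiv.Perm (Fin n)) {i j : ℕ} (h : (i, j) ∈ Rothe v) :
    ((Rothe v).filter (fun b' => b'.1 = i ∧ b'.2 ≤ j)).card = rowCount v i j := by
  obtain ⟨h1, h2, h3, h4⟩ := (mem_Rothe v i j).1 h
  symm
  refine Finset.card_nbij' (fun k => (i, k)) (fun b => b.2) ?_ ?_ ?_ ?_
  · intro k hk
    simp only [Finset.coe_filter, Finset.mem_range, Set.mem_ofPred_eq] at hk ⊢
    exact ⟨(mem_Rothe v _ _).2 ⟨by omega, by omega, by omega, by omega⟩, trivial, hk.2.1⟩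
  · rintro ⟨a, b⟩ hab
    simp only [Finset.coe_filter, Finset.mem_range, Set.mem_ofPred_eq] at hab ⊢
    obtain ⟨hD, rfl, hb⟩ := hab
    obtain ⟨g1, g2, g3, g4⟩ := (mem_Rothe v _ _).1 hD
    exact ⟨g2, hb, by omega⟩
  · intro k _
    rfl
  · rintro ⟨a, b⟩ hab
    simp only [Finset.coe_filter, Set.mem_ofPred_eq] at hab ⊢
    rw [hab.2.1]

lemma rowCount_add_rankMat (v : Equiv.Perm (Fin n)) (i : ℕ) {j : ℕ} (hj : j < n) :
    rowCount v i j + rankMat v i j = j + 1 := by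
  have := Finset.card_filter_add_card_filter_not (s := Finset.range (j + 1))
    (fun k => n ≤ permVal v k + i + 1)
  rw [Finset.card_range] at this
  rw [← this, add_comm]
  unfold rankMat rowCount
  congr 2 <;>
  · ext k
    simp only [Finset.mem_filter, Finset.mem_range]
    constructor
    · rintro ⟨_, _, _⟩; exact ⟨by omega, by assumption⟩
    · rintro ⟨_, _⟩; exact ⟨by omega, by omega, by assumption⟩

lemma colCount_add_rankMat (v : Equiv.Perm (Fin n)) {i : ℕ} (hi : i < n) (j : ℕ) :
    colCount v i j + rankMat v i j = i + 1 := by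
  have tot : ((Finset.range n).filter (fun k => n ≤ permVal v k + i + 1)).card = i + 1 := by
    rw [← Finset.card_range (i + 1)]
    refine Finset.card_nbij' (fun k => n - 1 - permVal v k)
      (fun a => permVal v.symm (n - 1 - a)) ?_ ?_ ?_ ?_
    · intro k hk
      simp only [Finset.coe_filter, Finset.mem_range, Set.mem_ofPred_eq, Finset.coe_range,
        Set.mem_Iio] at hk ⊢
      omega
    · intro a ha
      simp only [Finset.coe_filter, Finset.mem_range, Set.mem_ofPred_eq, Finset.coe_range,
        Set.mem_Iio] at ha ⊢
      refine ⟨permVal_lt _ (by omega), ?_⟩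
      rw [permVal_permVal_symm v (by omega)]
      omega
    · intro k hk
      simp only [Finset.coe_filter, Finset.mem_range, Set.mem_ofPred_eq] at hk ⊢
      have := permVal_lt v hk.1
      have e : n - 1 - (n - 1 - permVal v k) = permVal v k := by omega
      rw [e, permVal_symm_permVal v hk.1]
    · intro a ha
      simp only [Finset.coe_range, Set.mem_Iio] at ha ⊢
      rw [permVal_permVal_symm v (by omega)]
      omega
  rw [← tot, ← Finset.card_filter_add_card_filter_not (fun k => j < k), Finset.filter_filter,
    Finset.filter_filter]
  unfold rankMat colCount
  congr 2 <;>
  · ext k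
    simp only [Finset.mem_filter, not_lt]
    tauto

/-! ### Properties of the flattening map -/

lemma flattenBox_eq (v : Equiv.Perm (Fin n)) {i j : ℕ} (h : (i, j) ∈ Rothe v) :
    flattenBox v (i, j) = (colCount v i j - 1, j) := by
  simp only [flattenBox]
  rw [colCount_eq v h]

lemma colCount_pos (v : Equiv.Perm (Fin n)) {i j : ℕ} (h : (i, j) ∈ Rothe v) :
    0 < colCount v i j := by
  rw [← colCount_eq v h]
  exact Finset.card_pos.2 ⟨(i, j), by simp [h]⟩

lemma colCount_strict (v : Equiv.Perm (Fin n)) {i i₂ j : ℕ} (h : (i, j) ∈ Rothe v)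
    (h₂ : (i₂, j) ∈ Rothe v) (hlt : i₂ < i) : colCount v i₂ j < colCount v i j := by
  rw [← colCount_eq v h, ← colCount_eq v h₂]
  apply Finset.card_lt_card
  rw [Finset.ssubset_iff_of_subset]
  · exact ⟨(i, j), by simp [h], by simp [hlt]⟩
  · intro b hb
    simp only [Finset.mem_filter] at hb ⊢
    exact ⟨hb.1, hb.2.1, by omega⟩

lemma colCount_anti (v : Equiv.Perm (Fin n)) (i : ℕ) {j j₂ : ℕ} (hlt : j ≤ j₂) :
    colCount v i j₂ ≤ colCount v i j := by
  apply Finset.card_le_card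
  intro k hk
  simp only [Finset.mem_filter] at hk ⊢
  exact ⟨hk.1, by omega, hk.2.2⟩

lemma flattenBox_mem_staircase (v : Equiv.Perm (Fin n)) {i j : ℕ} (h : (i, j) ∈ Rothe v) :
    flattenBox v (i, j) ∈ staircase n := by
  rw [flattenBox_eq v h]
  obtain ⟨h1, h2, -, -⟩ := (mem_Rothe v i j).1 h
  have hp := colCount_pos v h
  have hle : colCount v i j ≤ (Finset.Ioo j n).card := by
    apply Finset.card_le_card
    intro k hk
    simp only [Finset.mem_filter, Finset.mem_range, Finset.mem_Ioo] at hk ⊢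
    omega
  rw [Nat.card_Ioo] at hle
  simp only [staircase, Finset.mem_filter, Finset.mem_product, Finset.mem_range]
  omega

lemma fkLabel_flattenBox (v : Equiv.Perm (Fin n)) {i j : ℕ} (h : (i, j) ∈ Rothe v) :
    fkLabel (flattenBox v (i, j)) = colCount v i j + j := by
  rw [flattenBox_eq v h]
  have hp := colCount_pos v h
  simp only [fkLabel]
  omega

lemma canonLabel_eq (v : Equiv.Perm (Fin n)) {i j : ℕ} (h : (i, j) ∈ Rothe v) :
    canonLabel v (i, j) = fkLabel (flattenBox v (i, j)) := by
  rw [fkLabel_flattenBox v h]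
  simp only [canonLabel]
  rw [rowCount_eq v h]
  obtain ⟨h1, h2, -, -⟩ := (mem_Rothe v i j).1 h
  have := rowCount_add_rankMat v i h2
  have := colCount_add_rankMat v h1 j
  omega

lemma flattenBox_injOn (v : Equiv.Perm (Fin n)) :
    Set.InjOn (flattenBox v) ↑(Rothe v) := by
  rintro ⟨i, j⟩ h ⟨i₂, j₂⟩ h₂ e
  rw [Finset.mem_coe] at h h₂
  rw [flattenBox_eq v h, flattenBox_eq v h₂, Prod.mk.injEq] at e
  obtain ⟨e, rfl⟩ := e
  have := colCount_pos v h
  have := colCount_pos v h₂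
  rcases lt_trichotomy i i₂ with hlt | rfl | hlt
  · have := colCount_strict v h₂ h hlt
    omega
  · rfl
  · have := colCount_strict v h h₂ hlt
    omega

/-- Passing from `(i₂, j₂)` to a box `(i, j)` of `D(v)` strictly northeast of it crosses
`i - i₂` rows and `j - j₂` columns, but the dots of row `i` and of column `j` are not gained. -/
lemma rankMat_gap (v : Equiv.Perm (Fin n)) {i j i₂ j₂ : ℕ} (h : (i, j) ∈ Rothe v)
    (_hi : i₂ < i) (hj : j₂ < j) :
    rankMat v i j ≤ rankMat v i₂ j₂ + (i - i₂ - 1) + (j - j₂ - 1) := by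
  obtain ⟨h1, h2, h3, h4⟩ := (mem_Rothe v i j).1 h
  set S := (Finset.range n).filter (fun k => k ≤ j ∧ n ≤ permVal v k + i + 1) with hS
  set T := (Finset.range n).filter (fun k => k ≤ j₂ ∧ n ≤ permVal v k + i₂ + 1) with hT
  set U := (Finset.range n).filter
    (fun k => k ≤ j ∧ n ≤ permVal v k + i + 1 ∧ ¬ n ≤ permVal v k + i₂ + 1) with hU
  have hsub : S ⊆ T ∪ U ∪ Finset.Ioo j₂ j := by
    intro k hk
    simp only [hS, hT, hU, Finset.mem_union, Finset.mem_filter, Finset.mem_range,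
      Finset.mem_Ioo] at hk ⊢
    by_cases hkj : k = j
    · subst hkj
      omega
    · omega
  have hUc : U.card ≤ (Finset.Ioo i₂ i).card := by
    apply Finset.card_le_card_of_injOn (fun k => n - 1 - permVal v k)
    · intro k hk
      simp only [hU, Finset.coe_filter, Finset.mem_range, Set.mem_ofPred_eq, Finset.coe_Ioo,
        Set.mem_Ioo] at hk ⊢
      have := Rothe_row_dot v h hk.2.1
      omega
    · intro k hk k' hk' e
      simp only [hU, Finset.coe_filter, Finset.mem_range, Set.mem_ofPred_eq] at hk hk' e
      have := permVal_lt v hk.1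
      have := permVal_lt v hk'.1
      exact permVal_inj v hk.1 hk'.1 (by omega)
  have c1 := Finset.card_le_card hsub
  have c2 := Finset.card_union_le (T ∪ U) (Finset.Ioo j₂ j)
  have c3 := Finset.card_union_le T U
  rw [Nat.card_Ioo] at c2 hUc
  change S.card ≤ T.card + _ + _
  omega

/-! ### Reading order -/

/-- `b` strictly precedes `b'` in reading order: it lies in a higher row, or in the same row
and further left. -/
def readLT (b b' : ℕ × ℕ) : Prop := b'.1 < b.1 ∨ (b.1 = b'.1 ∧ b.2 < b'.2)

/-- The FK labels of the two boxes differ by at least 2, so that the adjacent transpositions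
commute. -/
def farApart (b b' : ℕ × ℕ) : Prop := fkLabel b + 2 ≤ fkLabel b' ∨ fkLabel b' + 2 ≤ fkLabel b

/-- Flattening only exchanges, in reading order, boxes with commuting labels. -/
lemma flatten_order (v : Equiv.Perm (Fin n)) {b b' : ℕ × ℕ} (hb : b ∈ Rothe v)
    (hb' : b' ∈ Rothe v) (h : readLT b b') :
    readLT (flattenBox v b) (flattenBox v b') ∨
      farApart (flattenBox v b) (flattenBox v b') := by
  obtain ⟨i, j⟩ := b
  obtain ⟨i₂, j₂⟩ := b'
  have hp := colCount_pos v hb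
  have hp' := colCount_pos v hb'
  unfold farApart
  rw [fkLabel_flattenBox v hb, fkLabel_flattenBox v hb', flattenBox_eq v hb,
    flattenBox_eq v hb']
  simp only [readLT] at h ⊢
  rcases h with h | ⟨rfl, h⟩
  · rcases lt_trichotomy j j₂ with hj | rfl | hj
    · omega
    · have := colCount_strict v hb hb' h
      omega
    · have g := rankMat_gap v hb h hj
      have e := colCount_add_rankMat v ((mem_Rothe v _ _).1 hb).1 j
      have e' := colCount_add_rankMat v ((mem_Rothe v _ _).1 hb').1 j₂
      omega
  · have := colCount_anti v i h.le
    omega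

lemma mem_readingList {P : Finset (ℕ × ℕ)} {b : ℕ × ℕ} :
    b ∈ readingList n P ↔ b.1 < n ∧ b.2 < n ∧ b ∈ P := by
  obtain ⟨i, j⟩ := b
  simp only [readingList, List.mem_flatMap, List.mem_reverse, List.mem_range, List.mem_map,
    List.mem_filter, decide_eq_true_eq, Prod.mk.injEq]
  constructor
  · rintro ⟨a, ha, c, ⟨hc, hP⟩, rfl, rfl⟩
    exact ⟨ha, hc, hP⟩
  · rintro ⟨ha, hc, hP⟩
    exact ⟨i, ha, j, ⟨hc, hP⟩, rfl, rfl⟩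

lemma pairwise_readingList (P : Finset (ℕ × ℕ)) : (readingList n P).Pairwise readLT := by
  rw [readingList, List.pairwise_flatMap]
  constructor
  · intro i _
    rw [List.pairwise_map]
    apply List.Pairwise.filter
    exact List.pairwise_lt_range.imp fun h => Or.inr ⟨rfl, h⟩
  · rw [List.pairwise_reverse]
    refine List.pairwise_lt_range.imp ?_
    intro a c hac x hx y hy
    simp only [List.mem_map] at hx hy
    obtain ⟨_, _, rfl⟩ := hx
    obtain ⟨_, _, rfl⟩ := hy
    exact Or.inl hac

lemma nodup_readingList (P : Finset (ℕ × ℕ)) : (readingList n P).Nodup := by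
  refine (pairwise_readingList P).imp ?_
  rintro a b h rfl
  simp [readLT] at h

/-! ### Length and commuting Demazure steps -/

/-- Multiplying on the right by `s_l` at an ascent of `u` increases the length:
`(p, q) ↦ (s p, s q)` embeds the inversions of `u` in those of `u * s_l`, missing the new inversion. -/
lemma invCount_lt_of_ascent (u : Equiv.Perm (Fin n)) {a b : Fin n} (hab : (a : ℕ) + 1 = b)
    (h : u a < u b) : invCount u < invCount (u * Equiv.swap a b) := by
  have hne : a ≠ b := by
    rintro rfl
    omega
  unfold invCount
  rw [← Finset.card_map ((Equiv.prodCongr (Equiv.swap a b) (Equiv.swap a b)).toEmbedding)]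
  apply Finset.card_lt_card
  rw [Finset.ssubset_iff_of_subset]
  · refine ⟨(a, b), ?_, ?_⟩
    · refine Finset.mem_filter.2 ⟨Finset.mem_univ _, ?_⟩
      simp only [Equiv.Perm.mul_apply, Equiv.swap_apply_left, Equiv.swap_apply_right]
      exact ⟨by rw [Fin.lt_def]; omega, h⟩
    · rw [Finset.mem_map_equiv]
      simp only [Finset.mem_filter, Finset.mem_univ, true_and, Equiv.prodCongr_symm,
        Equiv.symm_swap, Equiv.prodCongr_apply, Prod.map, Equiv.swap_apply_left,
        Equiv.swap_apply_right, not_and, Fin.lt_def]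
      omega
  · intro x hx
    rw [Finset.mem_map] at hx
    obtain ⟨⟨p, q⟩, hpq, rfl⟩ := hx
    simp only [Finset.mem_filter, Finset.mem_univ, true_and] at hpq
    refine Finset.mem_filter.2 ⟨Finset.mem_univ _, ?_⟩
    simp only [Equiv.coe_toEmbedding, Equiv.prodCongr_apply, Prod.map, Equiv.Perm.mul_apply,
      Equiv.swap_apply_self]
    refine ⟨?_, hpq.2⟩
    have hpq' : ¬ (p = a ∧ q = b) := by
      rintro ⟨rfl, rfl⟩
      exact absurd h (not_lt.2 hpq.2.le)
    have := hpq.1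
    simp only [Equiv.swap_apply_def]
    simp only [Fin.lt_def, Fin.ext_iff] at *
    split_ifs <;> omega

lemma invCount_lt_mul_swap (u : Equiv.Perm (Fin n)) {a b : Fin n} (hab : (a : ℕ) + 1 = b) :
    invCount u < invCount (u * Equiv.swap a b) ↔ u a < u b := by
  refine ⟨fun h => ?_, invCount_lt_of_ascent u hab⟩
  by_contra hn
  have hne : u a ≠ u b := by
    intro e
    have := u.injective e
    subst this
    omega
  have hlt : u b < u a := lt_of_le_of_ne (not_lt.1 hn) hne.symm
  have := invCount_lt_of_ascent (u * Equiv.swap a b) hab (by simpa using hlt)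
  rw [mul_assoc, Equiv.swap_mul_self, mul_one] at this
  omega

lemma fkStep_of_lt (x : ℕ × ℕ) (h : fkLabel x < n) :
    ∃ a b : Fin n, (a : ℕ) + 1 = b ∧ (b : ℕ) = fkLabel x ∧ ∀ u : Equiv.Perm (Fin n),
      fkStep u x = if u a < u b then u * Equiv.swap a b else u := by
  have h1 : 1 ≤ fkLabel x := by
    simp [fkLabel]
  have hab : fkLabel x - 1 + 1 = fkLabel x := by omega
  refine ⟨⟨fkLabel x - 1, by omega⟩, ⟨fkLabel x, h⟩, hab, rfl, fun u => ?_⟩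
  unfold fkStep adjSwap
  rw [dif_pos ⟨h1, h⟩]
  simp only [invCount_lt_mul_swap u (a := ⟨fkLabel x - 1, by omega⟩) (b := ⟨fkLabel x, h⟩) hab]

lemma fkStep_of_le (u : Equiv.Perm (Fin n)) (x : ℕ × ℕ) (h : n ≤ fkLabel x) :
    fkStep u x = u := by
  unfold fkStep adjSwap
  rw [dif_neg (by omega)]
  simp

lemma fkStep_comm_of_lt (u : Equiv.Perm (Fin n)) {x y : ℕ × ℕ}
    (h : fkLabel x + 2 ≤ fkLabel y) : fkStep (fkStep u x) y = fkStep (fkStep u y) x := by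
  by_cases hy : fkLabel y < n
  swap
  · rw [fkStep_of_le _ y (by omega), fkStep_of_le _ y (by omega)]
  have hx : fkLabel x < n := by omega
  obtain ⟨a, b, hab, hb, ex⟩ := fkStep_of_lt x hx
  obtain ⟨c, d, hcd, hd, ey⟩ := fkStep_of_lt y hy
  rw [ey, ey, ex, ex]
  have d1 : a ≠ c := by rintro rfl; omega
  have d2 : a ≠ d := by rintro rfl; omega
  have d3 : b ≠ c := by rintro rfl; omega
  have d4 : b ≠ d := by rintro rfl; omega
  have hc : Equiv.swap a b * Equiv.swap c d = Equiv.swap c d * Equiv.swap a b := by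
    apply Equiv.Perm.Disjoint.commute
    intro z
    simp only [Equiv.swap_apply_def]
    grind
  have e1 := Equiv.swap_apply_of_ne_of_ne d1.symm d3.symm
  have e2 := Equiv.swap_apply_of_ne_of_ne d2.symm d4.symm
  have e3 := Equiv.swap_apply_of_ne_of_ne d1 d2
  have e4 := Equiv.swap_apply_of_ne_of_ne d3 d4
  by_cases p : u a < u b <;> by_cases q : u c < u d <;>
    simp [p, q, e1, e2, e3, e4, mul_assoc, hc]

lemma fkStep_comm (u : Equiv.Perm (Fin n)) {x y : ℕ × ℕ} (h : farApart x y) :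
    fkStep (fkStep u x) y = fkStep (fkStep u y) x := by
  rcases h with h | h
  · exact fkStep_comm_of_lt u h
  · exact (fkStep_comm_of_lt u h).symm

lemma foldl_move (x : ℕ × ℕ) (A B : List (ℕ × ℕ)) (u : Equiv.Perm (Fin n))
    (h : ∀ a ∈ A, farApart a x) :
    (A ++ x :: B).foldl fkStep u = (x :: (A ++ B)).foldl fkStep u := by
  induction A generalizing u with
  | nil => rfl
  | cons a A ih =>
    have := ih (fkStep u a) fun b hb => h b (List.mem_cons_of_mem _ hb)
    simp only [List.cons_append, List.foldl_cons] at this ⊢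
    rw [this, fkStep_comm u (h a List.mem_cons_self)]

/-- A word whose out-of-order pairs all commute has the same Demazure product as its sorted
rearrangement: the first letter of the sorted word can be moved to the front. -/
lemma foldl_eq_of_perm (L₂ L₁ : List (ℕ × ℕ)) (u : Equiv.Perm (Fin n)) (hp : L₁.Perm L₂)
    (h₂ : L₂.Pairwise readLT) (h₁ : L₁.Pairwise fun x y => readLT x y ∨ farApart x y) :
    L₁.foldl fkStep u = L₂.foldl fkStep u := by
  induction L₂ generalizing L₁ u with
  | nil => rw [hp.eq_nil]
  | cons x L ih =>
    obtain ⟨A, B, rfl⟩ := List.append_of_mem (hp.mem_iff.2 List.mem_cons_self)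
    have hp' : (A ++ B).Perm L := (List.perm_middle.symm.trans hp).cons_inv
    rw [List.pairwise_cons] at h₂
    rw [foldl_move, List.foldl_cons, List.foldl_cons]
    · refine ih _ _ hp' h₂.2 (h₁.sublist ?_)
      exact (List.Sublist.refl A).append (List.sublist_cons_self x B)
    · intro a ha
      have hxa := h₂.1 a (hp'.mem_iff.1 (List.mem_append_left B ha))
      rcases (List.pairwise_append.1 h₁).2.2 a ha x List.mem_cons_self with hax | hax
      · simp only [readLT] at hxa hax
        omega
      · exact hax

lemma foldl_demStep (v : Equiv.Perm (Fin n)) (L : List (ℕ × ℕ)) (hL : ∀ b ∈ L, b ∈ Rothe v)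
    (u : Equiv.Perm (Fin n)) :
    L.foldl (demStep v) u = (L.map (flattenBox v)).foldl fkStep u := by
  rw [List.foldl_map]
  apply List.foldl_ext
  intro u' b hb
  unfold demStep fkStep
  rw [canonLabel_eq v (hL b hb)]

lemma fkDemazure_image (v : Equiv.Perm (Fin n)) {P : Finset (ℕ × ℕ)} (hP : P ⊆ Rothe v) :
    fkDemazure n (P.image (flattenBox v)) = demazure v P := by
  have hmem : ∀ b ∈ readingList n P, b ∈ Rothe v := fun b hb => hP (mem_readingList.1 hb).2.2
  unfold fkDemazure demazure
  rw [foldl_demStep v _ hmem]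
  symm
  apply foldl_eq_of_perm _ _ _ _ (pairwise_readingList _)
  · rw [List.pairwise_map]
    exact (pairwise_readingList P).imp_of_mem fun ha hb h =>
      flatten_order v (hmem _ ha) (hmem _ hb) h
  · rw [List.perm_ext_iff_of_nodup _ (nodup_readingList _)]
    · intro c
      simp only [List.mem_map, mem_readingList, Finset.mem_image]
      constructor
      · rintro ⟨⟨i, j⟩, ⟨-, -, hb⟩, rfl⟩
        have hs := flattenBox_mem_staircase v (hP hb)
        simp only [staircase, Finset.mem_filter, Finset.mem_product, Finset.mem_range] at hs
        exact ⟨hs.1.1, hs.1.2, (i, j), hb, rfl⟩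
      · rintro ⟨-, -, ⟨i, j⟩, hb, rfl⟩
        obtain ⟨h1, h2, -, -⟩ := (mem_Rothe v i j).1 (hP hb)
        exact ⟨(i, j), ⟨h1, h2, hb⟩, rfl⟩
    · refine List.Nodup.map_on ?_ (nodup_readingList P)
      intro a ha b hb e
      exact flattenBox_injOn v (hmem a ha) (hmem b hb) e

/-- Proposition 3.4: the flattening map is injective on `D(v)`, lands
in the staircase, preserves canonical labels, and sends reduced pipe dreams on `D(v)`
for `w` to reduced Fomin–Kirillov pipe dreams for `w`. -/
theorem flatten_pipe_dreams (n : ℕ) (v w : Equiv.Perm (Fin n)) :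
    Set.InjOn (flattenBox v) ↑(Rothe v) ∧
    (∀ b ∈ Rothe v, flattenBox v b ∈ staircase n) ∧
    (∀ b ∈ Rothe v, canonLabel v b = fkLabel (flattenBox v b)) ∧
    (∀ P ∈ RedPipes v w, P.image (flattenBox v) ∈ RedFKPipes w) := by
  refine ⟨flattenBox_injOn v, fun b hb => flattenBox_mem_staircase v hb,
    fun b hb => canonLabel_eq v hb, fun P hP => ?_⟩
  simp only [RedPipes, Pipes, Finset.mem_filter, Finset.mem_powerset] at hP
  obtain ⟨⟨hsub, hdem⟩, hcard⟩ := hP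
  simp only [RedFKPipes, FKPipes, Finset.mem_filter, Finset.mem_powerset]
  refine ⟨⟨?_, ?_⟩, ?_⟩
  · intro c hc
    obtain ⟨b, hb, rfl⟩ := Finset.mem_image.1 hc
    exact flattenBox_mem_staircase v (hsub hb)
  · rw [fkDemazure_image v hsub, hdem]
  · rw [Finset.card_image_of_injOn ((flattenBox_injOn v).mono (by exact_mod_cast hsub)), hcard]

end
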